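/- Let Q be a primitive positive-definite quaternary integer-valued quadratic form, and let n be an odd positive integer. If n is represented by Q over ℤ_2 (i.e. there exists x ∈ ℤ_2⁴ with Q(x) = n), then the local density β_2(Q;n) exists and satisfies β_2(Q;n) ≥ 1/2. -/

import Mathlib

open scoped BigOperators

/-- Value of the quadratic form with Gram matrix `A` (symmetric, even diagonal)
over any commutative ring: `Q(x) = ∑ (aᵢᵢ/2) xᵢ² + ∑_{i<j} aᵢⱼ xᵢ xⱼ`. -/
def Qval {R : Type*} [CommRing R] (A : Matrix (Fin 4) (Fin 4) ℤ) (x : Fin 4 → R) : R :=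
  (∑ i, ((A i i / 2 : ℤ) : R) * x i ^ 2) +
    ∑ i, ∑ j ∈ Finset.Ioi i, ((A i j : ℤ) : R) * (x i * x j)

/-- `A` is the Gram matrix of an integer-valued quadratic form. -/
def IsGram (A : Matrix (Fin 4) (Fin 4) ℤ) : Prop :=
  A.IsSymm ∧ ∀ i, 2 ∣ A i i

/-- The form is primitive: the gcd of its coefficients is 1. -/
def IsPrimitiveQF (A : Matrix (Fin 4) (Fin 4) ℤ) : Prop :=
  ∀ d : ℤ, (∀ i, d ∣ A i i / 2) → (∀ i j, i ≠ j → d ∣ A i j) → IsUnit d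

/-- The form is positive definite. -/
def PosDefQF (A : Matrix (Fin 4) (Fin 4) ℤ) : Prop :=
  (A.map (Int.cast : ℤ → ℝ)).PosDef

/-- `N` is the level of the form with Gram matrix `A`: the smallest positive integer
such that `N • A⁻¹` has integer entries and even diagonal. -/
def IsLevel (A : Matrix (Fin 4) (Fin 4) ℤ) (N : ℕ) : Prop :=
  0 < N ∧
    (∃ B : Matrix (Fin 4) (Fin 4) ℤ,
      B.map (Int.cast : ℤ → ℚ) = (N : ℚ) • (A.map (Int.cast : ℤ → ℚ))⁻¹ ∧ ∀ i, 2 ∣ B i i) ∧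
    ∀ M : ℕ, 0 < M →
      (∃ B : Matrix (Fin 4) (Fin 4) ℤ,
        B.map (Int.cast : ℤ → ℚ) = (M : ℚ) • (A.map (Int.cast : ℤ → ℚ))⁻¹ ∧ ∀ i, 2 ∣ B i i) →
      N ≤ M

/-- `n` is represented by the form over `ℤ`. -/
def Represented (A : Matrix (Fin 4) (Fin 4) ℤ) (n : ℕ) : Prop :=
  ∃ x : Fin 4 → ℤ, Qval A x = (n : ℤ)

/-- `n` is locally represented: representable over `ℤ_p` for every prime `p`. -/
def LocallyRepresented (A : Matrix (Fin 4) (Fin 4) ℤ) (n : ℕ) : Prop :=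
  ∀ (p : ℕ) [Fact p.Prime], ∃ x : Fin 4 → ℤ_[p], Qval A x = (n : ℤ_[p])

/-- Number of solutions of `Q(x) ≡ n mod p^k`. -/
noncomputable def localCount (A : Matrix (Fin 4) (Fin 4) ℤ) (p n k : ℕ) : ℕ :=
  Nat.card {x : Fin 4 → ZMod (p ^ k) // Qval A x = (n : ZMod (p ^ k))}

/-- The local density `β_p(Q;n)` exists and is at least `c`. -/
def DensityBound (A : Matrix (Fin 4) (Fin 4) ℤ) (p n : ℕ) (c : ℝ) : Prop :=
  ∃ β : ℝ,
    Filter.Tendsto (fun k => (localCount A p n k : ℝ) / (p : ℝ) ^ (3 * k))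
      Filter.atTop (nhds β) ∧ c ≤ β



theorem halving {V : Type*} [DecidableEq V] (S : Finset V) (φ : V → Prop) [DecidablePred φ]
    (g : V → V) (hinj : Function.Injective g)
    (h1 : ∀ x ∈ S, φ x → g x ∈ S ∧ ¬ φ (g x))
    (h2 : ∀ x ∈ S, ¬ φ x → g x ∈ S ∧ φ (g x)) :
    2 * (S.filter φ).card = S.card := by
  have a : (S.filter φ).card ≤ (S.filter (fun x => ¬ φ x)).card := by
    refine Finset.card_le_card_of_injOn g ?_ hinj.injOn
    intro x hx
    simp only [Finset.coe_filter, Set.mem_ofPred_eq] at hx ⊢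
    exact h1 x hx.1 hx.2
  have b : (S.filter (fun x => ¬ φ x)).card ≤ (S.filter φ).card := by
    refine Finset.card_le_card_of_injOn g ?_ hinj.injOn
    intro x hx
    simp only [Finset.coe_filter, Set.mem_ofPred_eq] at hx ⊢
    exact h2 x hx.1 hx.2
  have c := Finset.card_filter_add_card_filter_not (s := S) φ
  omega

theorem Qval_map {R S : Type*} [CommRing R] [CommRing S] (f : R →+* S)
    (A : Matrix (Fin 4) (Fin 4) ℤ) (x : Fin 4 → R) :
    Qval A (fun i => f (x i)) = f (Qval A x) := by
  simp [Qval, map_sum]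

theorem Qval_smul {R : Type*} [CommRing R]
    (A : Matrix (Fin 4) (Fin 4) ℤ) (t : R) (x : Fin 4 → R) :
    Qval A (t • x) = t ^ 2 * Qval A x := by
  simp only [Qval, Pi.smul_apply, smul_eq_mul]
  rw [mul_add]
  congr 1 <;> simp only [Finset.mul_sum]
  · exact Finset.sum_congr rfl fun i _ => by ring
  · exact Finset.sum_congr rfl fun i _ => Finset.sum_congr rfl fun j _ => by ring

/-- The polar form. -/
def Bval {R : Type*} [CommRing R] (A : Matrix (Fin 4) (Fin 4) ℤ) (x y : Fin 4 → R) : R :=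
  (∑ i, ((A i i / 2 : ℤ) : R) * (2 * x i * y i)) +
    ∑ i, ∑ j ∈ Finset.Ioi i, ((A i j : ℤ) : R) * (x i * y j + y i * x j)

section polar
variable {R : Type*} [CommRing R] (A : Matrix (Fin 4) (Fin 4) ℤ)

theorem Qval_add (x y : Fin 4 → R) : Qval A (x + y) = Qval A x + Qval A y + Bval A x y := by
  have e : ∀ a b c d e f : R, a + b + (c + d) + (e + f) = (a + c + e) + (b + d + f) := by
    intros; ring
  simp only [Qval, Bval, Pi.add_apply]
  rw [e]
  congr 1 <;> simp only [← Finset.sum_add_distrib]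
  · exact Finset.sum_congr rfl fun i _ => by ring
  · exact Finset.sum_congr rfl fun i _ => Finset.sum_congr rfl fun j _ => by ring

theorem Bval_comm (x y : Fin 4 → R) : Bval A x y = Bval A y x := by
  simp only [Bval]
  congr 1
  · exact Finset.sum_congr rfl fun i _ => by ring
  · exact Finset.sum_congr rfl fun i _ => Finset.sum_congr rfl fun j _ => by ring

theorem Bval_add (x y z : Fin 4 → R) : Bval A x (y + z) = Bval A x y + Bval A x z := by
  simp only [Bval, Pi.add_apply]
  rw [add_add_add_comm]
  congr 1 <;> simp only [← Finset.sum_add_distrib]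
  · exact Finset.sum_congr rfl fun i _ => by ring
  · exact Finset.sum_congr rfl fun i _ => Finset.sum_congr rfl fun j _ => by ring

theorem Bval_smul (t : R) (x y : Fin 4 → R) : Bval A x (t • y) = t * Bval A x y := by
  simp only [Bval, Pi.smul_apply, smul_eq_mul]
  rw [mul_add]
  congr 1 <;> simp only [Finset.mul_sum]
  · exact Finset.sum_congr rfl fun i _ => by ring
  · exact Finset.sum_congr rfl fun i _ => Finset.sum_congr rfl fun j _ => by ring

theorem Bval_self (x : Fin 4 → R) : Bval A x x = 2 * Qval A x := by
  simp only [Bval, Qval]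
  rw [mul_add]
  congr 1 <;> simp only [Finset.mul_sum]
  · exact Finset.sum_congr rfl fun i _ => by ring
  · exact Finset.sum_congr rfl fun i _ => Finset.sum_congr rfl fun j _ => by ring

theorem Bval_add_left (x y z : Fin 4 → R) : Bval A (x + y) z = Bval A x z + Bval A y z := by
  rw [Bval_comm, Bval_add, Bval_comm A z x, Bval_comm A z y]

theorem Bval_smul_left (t : R) (x y : Fin 4 → R) : Bval A (t • x) y = t * Bval A x y := by
  rw [Bval_comm, Bval_smul, Bval_comm]

end polar

/-! ### Going from `2^k` to `2^(k+1)` -/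

theorem cast_eq_iff (k : ℕ) (y z : ZMod (2 ^ (k + 1))) :
    ZMod.castHom (pow_dvd_pow 2 (Nat.le_succ k)) (ZMod (2 ^ k)) y =
      ZMod.castHom (pow_dvd_pow 2 (Nat.le_succ k)) (ZMod (2 ^ k)) z ↔
    y = z ∨ y = z + 2 ^ k := by
  have hz : (2 : ZMod (2 ^ k)) ^ k = 0 := by
    have := ZMod.natCast_self (2 ^ k); push_cast at this; exact this
  constructor
  · intro h
    have h0 : ZMod.castHom (pow_dvd_pow 2 (Nat.le_succ k)) (ZMod (2 ^ k)) (y - z) = 0 := by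
      rw [map_sub, h, sub_self]
    obtain ⟨w, hw⟩ : ∃ w, w = y - z := ⟨_, rfl⟩
    rw [← hw] at h0
    have hlt := ZMod.val_lt w
    have hv : ((w.val : ℕ) : ZMod (2 ^ (k + 1))) = w := ZMod.natCast_zmod_val w
    rw [← hv, map_natCast, ZMod.natCast_eq_zero_iff] at h0
    obtain ⟨c, hc⟩ := h0
    rw [hc, pow_succ] at hlt
    have hc2 : c < 2 := lt_of_mul_lt_mul_left hlt (Nat.zero_le _)
    rw [hc] at hv
    interval_cases c
    · left
      simp at hv
      rw [← hv] at hw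
      exact (sub_eq_zero.mp hw.symm)
    · right
      push_cast at hv
      rw [mul_one] at hv
      rw [hv, hw]; ring
  · rintro (rfl | rfl)
    · rfl
    · rw [map_add, map_pow, map_ofNat, hz, add_zero]

theorem two_pow_ne (k : ℕ) : (2 : ZMod (2 ^ (k + 1))) ^ k ≠ 0 := by
  intro h
  have : ((2 ^ k : ℕ) : ZMod (2 ^ (k + 1))) = 0 := by push_cast; exact h
  rw [ZMod.natCast_eq_zero_iff] at this
  have := Nat.le_of_dvd (by positivity) this
  rw [pow_succ] at this
  have : 0 < 2 ^ k := by positivity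
  omega

theorem card_lift (k : ℕ) (P : (Fin 4 → ZMod (2 ^ k)) → Prop) [DecidablePred P] :
    (Finset.univ.filter (fun x : Fin 4 → ZMod (2 ^ (k + 1)) =>
      P (fun i => ZMod.castHom (pow_dvd_pow 2 (Nat.le_succ k)) (ZMod (2 ^ k)) (x i)))).card =
    16 * (Finset.univ.filter P).card := by
  set f := ZMod.castHom (pow_dvd_pow 2 (Nat.le_succ k)) (ZMod (2 ^ k)) with hf
  have hs : Function.Surjective f := ZMod.castHom_surjective _
  rw [Finset.card_eq_sum_card_fiberwise (f := fun x i => f (x i)) (t := Finset.univ.filter P)]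
  · rw [Finset.sum_const_nat (m := 16), mul_comm]
    intro y hy
    choose z hz using fun i => hs (y i)
    have : (Finset.univ.filter (fun x : Fin 4 → ZMod (2 ^ (k + 1)) =>
      P (fun i => f (x i)))).filter (fun x => (fun i => f (x i)) = y) =
        Fintype.piFinset (fun i => ({z i, z i + 2 ^ k} : Finset (ZMod (2 ^ (k + 1))))) := by
      ext x
      simp only [Finset.mem_filter, Finset.mem_univ, true_and, Fintype.mem_piFinset,
        Finset.mem_insert, Finset.mem_singleton]
      constructor
      · rintro ⟨_, h⟩ i
        rw [← cast_eq_iff, ← hf, hz, ← h]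
      · intro h
        have : (fun i => f (x i)) = y := by
          ext i
          have := (cast_eq_iff _ _ _).2 (h i)
          rw [← hf, hz] at this
          exact this
        refine ⟨?_, this⟩
        rw [this]; simpa using hy
    rw [this, Fintype.card_piFinset]
    have h2 : ∀ i, ({z i, z i + 2 ^ k} : Finset (ZMod (2 ^ (k + 1)))).card = 2 := by
      intro i
      refine Finset.card_pair ?_
      intro h
      exact two_pow_ne k (left_eq_add.mp h)
    simp [h2]
  · intro x hx
    simpa using hx

theorem localCount_eq (A : Matrix (Fin 4) (Fin 4) ℤ) (n k : ℕ) :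
    localCount A 2 n k = (Finset.univ.filter (fun x : Fin 4 → ZMod (2 ^ k) =>
      Qval A x = (n : ZMod (2 ^ k)))).card := by
  rw [localCount, Nat.card_eq_fintype_card, Fintype.card_subtype]

theorem localCount_succ (A : Matrix (Fin 4) (Fin 4) ℤ) (n j : ℕ) (hn : Odd n) (hj : 2 ≤ j) :
    localCount A 2 n (j + 1 + 1) = 8 * localCount A 2 n (j + 1) := by
  have hl := card_lift (j + 1) (fun x => Qval A x = (n : ZMod (2 ^ (j + 1))))
  rw [← localCount_eq] at hl
  have hzero : (2 : ZMod (2 ^ (j + 1 + 1))) ^ (j + 1 + 1) = 0 := by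
    have := ZMod.natCast_self (2 ^ (j + 1 + 1)); push_cast at this; exact this
  have hzero' : ∀ m, (2 : ZMod (2 ^ (j + 1 + 1))) ^ (j + 1 + 1 + m) = 0 := by
    intro m; rw [pow_add _ (j + 1 + 1) m, hzero, zero_mul]
  obtain ⟨d, rfl⟩ := Nat.exists_eq_add_of_le hj
  have e1 : (2 : ZMod (2 ^ (2 + d + 1 + 1))) ^ (2 + d) * 2 ^ (2 + d) = 0 := by
    rw [← pow_add, ← hzero' d]; congr 1; ring
  have e2 : (2 : ZMod (2 ^ (2 + d + 1 + 1))) ^ (2 + d + 1) * 2 = 0 := by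
    rw [← pow_succ]; exact hzero
  have e3 : (2 : ZMod (2 ^ (2 + d + 1 + 1))) ^ (2 + d) * 2 = 2 ^ (2 + d + 1) := by
    rw [← pow_succ]
  generalize 2 + d = j at *
  set P : ZMod (2 ^ (j + 1 + 1)) := 2 ^ j with hP
  set D : ZMod (2 ^ (j + 1 + 1)) := 2 ^ (j + 1) with hD
  have eDD : D * D = 0 := by rw [← e3]; linear_combination 4 * e1
  obtain ⟨m, rfl⟩ := hn
  have hne : D ≠ 0 := two_pow_ne (j + 1)
  have ht : (1 + P) ^ 2 = 1 + D := by linear_combination e1 + e3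
  have key : ∀ x : Fin 4 → ZMod (2 ^ (j + 1 + 1)),
      Qval A (fun i => ZMod.castHom (pow_dvd_pow 2 (Nat.le_succ (j + 1))) (ZMod (2 ^ (j + 1))) (x i))
        = ((2 * m + 1 : ℕ) : ZMod (2 ^ (j + 1))) ↔
      (Qval A x = ((2 * m + 1 : ℕ) : ZMod (2 ^ (j + 1 + 1))) ∨
        Qval A x = ((2 * m + 1 : ℕ) : ZMod (2 ^ (j + 1 + 1))) + D) := by
    intro x
    rw [Qval_map, ← cast_eq_iff, map_natCast]
  simp only [key] at hl
  have hh : 2 * ((Finset.univ.filter (fun x : Fin 4 → ZMod (2 ^ (j + 1 + 1)) =>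
      (Qval A x = ((2 * m + 1 : ℕ) : ZMod (2 ^ (j + 1 + 1))) ∨
        Qval A x = ((2 * m + 1 : ℕ) : ZMod (2 ^ (j + 1 + 1))) + D))).filter (fun x =>
      Qval A x = ((2 * m + 1 : ℕ) : ZMod (2 ^ (j + 1 + 1))))).card = (Finset.univ.filter (fun x : Fin 4 → ZMod (2 ^ (j + 1 + 1)) =>
      (Qval A x = ((2 * m + 1 : ℕ) : ZMod (2 ^ (j + 1 + 1))) ∨
        Qval A x = ((2 * m + 1 : ℕ) : ZMod (2 ^ (j + 1 + 1))) + D))).card := halving _ (fun x : Fin 4 → ZMod (2 ^ (j + 1 + 1)) =>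
      Qval A x = ((2 * m + 1 : ℕ) : ZMod (2 ^ (j + 1 + 1)))) (fun x => (1 + P) • x) (by
        intro x y hxy
        simp only at hxy
        have : (((1 + D) * (1 + P)) * (1 + P)) • x = (((1 + D) * (1 + P)) * (1 + P)) • y := by
          rw [mul_smul, hxy, ← mul_smul]
        have e : ((1 + D) * (1 + P)) * (1 + P) = 1 := by
          linear_combination (1 + D) * ht + eDD + e2
        rwa [e, one_smul, one_smul] at this)
    (by
      intro x hx h
      have hq : Qval A ((1 + P) • x) = ((2 * m + 1 : ℕ) : ZMod (2 ^ (j + 1 + 1))) + D := by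
        rw [Qval_smul, ht, h]; push_cast; linear_combination m * e2
      simp only [Finset.mem_filter, Finset.mem_univ, true_and]
      refine ⟨Or.inr hq, ?_⟩
      rw [hq]
      exact fun h => hne (add_eq_left.mp h))
    (by
      intro x hx h
      simp only [Finset.mem_filter, Finset.mem_univ, true_and] at hx
      have h := hx.resolve_left h
      have hq : Qval A ((1 + P) • x) = ((2 * m + 1 : ℕ) : ZMod (2 ^ (j + 1 + 1))) := by
        rw [Qval_smul, ht, h]; push_cast; linear_combination (m + 1) * e2 + eDD
      simp only [Finset.mem_filter, Finset.mem_univ, true_and]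
      exact ⟨Or.inl hq, hq⟩)
  rw [hl, Finset.filter_filter] at hh
  rw [localCount_eq A _ (j + 1 + 1)]
  have : (Finset.univ.filter (fun x : Fin 4 → ZMod (2 ^ (j + 1 + 1)) =>
      Qval A x = ((2 * m + 1 : ℕ) : ZMod (2 ^ (j + 1 + 1))))) =
      (Finset.univ.filter (fun x : Fin 4 → ZMod (2 ^ (j + 1 + 1)) =>
      (Qval A x = ((2 * m + 1 : ℕ) : ZMod (2 ^ (j + 1 + 1))) ∨
        Qval A x = ((2 * m + 1 : ℕ) : ZMod (2 ^ (j + 1 + 1))) + D) ∧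
        Qval A x = ((2 * m + 1 : ℕ) : ZMod (2 ^ (j + 1 + 1))))) := by
    apply Finset.filter_congr
    intro x _
    tauto
  rw [this]
  omega

theorem localCount_ge_three (A : Matrix (Fin 4) (Fin 4) ℤ) (n d : ℕ) (hn : Odd n) :
    localCount A 2 n (3 + d) = 8 ^ d * localCount A 2 n 3 := by
  induction d with
  | zero => simp
  | succ d ih =>
    have := localCount_succ A n (2 + d) hn (by omega)
    rw [show 3 + (d + 1) = 2 + d + 1 + 1 by ring, this, show 2 + d + 1 = 3 + d by ring, ih]
    ring

/-! ### Counting modulo 8 -/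

theorem z8_eight : (8 : ZMod 8) = 0 := by decide
theorem z8_four : ∀ s : ZMod 8, 4 * s = 0 ∨ 4 * s = 4 := by decide
theorem z8_two : ∀ s : ZMod 8, 4 * s = 0 → 2 * s = 0 ∨ 2 * s = 4 := by decide
theorem z8_two' : ∀ s t : ZMod 8, 4 * s = 4 * t → 2 * s = 2 * t ∨ 2 * s = 2 * t + 4 := by decide
theorem z8_one' : ∀ s t : ZMod 8, 2 * s = 2 * t → s = t ∨ s = t + 4 := by decide
theorem z8_ne : ∀ s : ZMod 8, s + 4 ≠ s := by decide
theorem z8_four_ne : (4 : ZMod 8) ≠ 0 := by decide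

abbrev V8 := Fin 4 → ZMod 8

theorem fiber_card (a : V8) :
    (Finset.univ.filter (fun x : V8 => (4 : ZMod 8) • x = (4 : ZMod 8) • a)).card = 256 := by
  have : (Finset.univ.filter (fun x : V8 => (4 : ZMod 8) • x = (4 : ZMod 8) • a)) =
      Fintype.piFinset (fun i => Finset.univ.filter (fun s : ZMod 8 => 4 * s = 4 * a i)) := by
    ext x
    simp [funext_iff]
  rw [this, Fintype.card_piFinset]
  have h : ∀ t : ZMod 8, (Finset.univ.filter (fun s : ZMod 8 => 4 * s = 4 * t)).card = 4 := by
    decide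
  simp [h]

theorem fiber_repr (a x : V8) (h : (4 : ZMod 8) • x = (4 : ZMod 8) • a) :
    ∃ c : V8, x = a + (2 : ZMod 8) • c := by
  have key : ∀ s t : ZMod 8, 4 * s = 4 * t → ∃ c, s = t + 2 * c := by decide
  have : ∀ i, ∃ c, x i = a i + 2 * c := fun i => key _ _ (by simpa using congrFun h i)
  choose c hc using this
  exact ⟨c, funext fun i => by simpa using hc i⟩

section core
variable (A : Matrix (Fin 4) (Fin 4) ℤ)

theorem four_smul_add_two (x y : V8) :
    (4 : ZMod 8) • (x + (2 : ZMod 8) • y) = (4 : ZMod 8) • x := by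
  ext i
  simp only [Pi.smul_apply, Pi.add_apply, smul_eq_mul]
  linear_combination y i * z8_eight

theorem Q_add_two (x y : V8) :
    Qval A (x + (2 : ZMod 8) • y) = Qval A x + 4 * Qval A y + 2 * Bval A x y := by
  rw [Qval_add, Qval_smul, Bval_smul]; ring

theorem quarter (n : ZMod 8) (S : Finset V8) (f : V8 → V8)
    (hS : ∀ x ∈ S, ∀ b, x + (2 : ZMod 8) • b ∈ S)
    (hQ : ∀ x ∈ S, 4 * Qval A x = 4 * n)
    (hf : ∀ x ∈ S, 4 * Bval A x (f ((4 : ZMod 8) • x)) = 4) :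
    4 * (S.filter (fun x => Qval A x = n)).card = S.card := by
  have inj : ∀ F : V8 → V8, Function.Injective
      (fun x : V8 => x + (2 : ZMod 8) • F ((4 : ZMod 8) • x)) := by
    intro F x y h
    simp only at h
    have h4 : (4 : ZMod 8) • x = (4 : ZMod 8) • y := by
      rw [← four_smul_add_two x (F ((4 : ZMod 8) • x)), h, four_smul_add_two]
    rw [h4] at h
    exact add_right_cancel h
  have s1 : 2 * (S.filter (fun x => 2 * Qval A x = 2 * n)).card = S.card := halving S (fun x => 2 * Qval A x = 2 * n) _ (inj f)
    (by
      intro x hx h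
      refine ⟨hS x hx _, ?_⟩
      rw [Q_add_two]
      intro h'
      apply z8_four_ne
      linear_combination h' - h - hf x hx - Qval A (f ((4 : ZMod 8) • x)) * z8_eight)
    (by
      intro x hx h
      refine ⟨hS x hx _, ?_⟩
      rw [Q_add_two]
      have := (z8_two' _ _ (hQ x hx)).resolve_left h
      linear_combination this + hf x hx + (Qval A (f ((4 : ZMod 8) • x)) + 1) * z8_eight)
  have s2 : 2 * ((S.filter (fun x => 2 * Qval A x = 2 * n)).filter
      (fun x => Qval A x = n)).card = (S.filter (fun x => 2 * Qval A x = 2 * n)).card := halving (S.filter (fun x => 2 * Qval A x = 2 * n)) (fun x => Qval A x = n) _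
    (inj (fun y => (2 : ZMod 8) • f y))
    (by
      intro x hx h
      rw [Finset.mem_filter] at hx ⊢
      simp only [Q_add_two, Bval_smul, Qval_smul]
      refine ⟨⟨hS x hx.1 _, ?_⟩, ?_⟩
      · linear_combination hx.2 + (4 * Qval A (f ((4 : ZMod 8) • x)) +
          Bval A x (f ((4 : ZMod 8) • x))) * z8_eight
      · intro h'
        apply z8_four_ne
        linear_combination h' - h - hf x hx.1 - 2 * Qval A (f ((4 : ZMod 8) • x)) * z8_eight)
    (by
      intro x hx h
      rw [Finset.mem_filter] at hx ⊢
      simp only [Q_add_two, Bval_smul, Qval_smul]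
      refine ⟨⟨hS x hx.1 _, ?_⟩, ?_⟩
      · linear_combination hx.2 + (4 * Qval A (f ((4 : ZMod 8) • x)) +
          Bval A x (f ((4 : ZMod 8) • x))) * z8_eight
      · have := (z8_one' _ _ hx.2).resolve_left h
        linear_combination this + hf x hx.1 +
          (2 * Qval A (f ((4 : ZMod 8) • x)) + 1) * z8_eight)
  have : (S.filter (fun x => 2 * Qval A x = 2 * n)).filter (fun x => Qval A x = n) =
      S.filter (fun x => Qval A x = n) := by
    rw [Finset.filter_filter]
    refine Finset.filter_congr fun x _ => ⟨fun h => h.2, fun h => ⟨by rw [h], h⟩⟩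
  rw [this] at s2
  omega

/-- Half of `V8` is where the parity of `B(x,u)` takes a given value. -/
theorem halfB (u v : V8) (huv : 4 * Bval A u v = 4) (t : ZMod 8) (ht : t = 0 ∨ t = 4) :
    (Finset.univ.filter (fun x : V8 => 4 * Bval A x u = t)).card = 2048 := by
  have := halving (Finset.univ : Finset V8) (fun x => 4 * Bval A x u = t) (fun x => x + v)
    (add_left_injective v)
    (by
      intro x _ h
      refine ⟨Finset.mem_univ _, ?_⟩
      rw [Bval_add_left, mul_add, h, Bval_comm A v u, huv]
      exact z8_ne t)
    (by
      intro x _ h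
      refine ⟨Finset.mem_univ _, ?_⟩
      rw [Bval_add_left, mul_add, Bval_comm A v u, huv]
      rcases z8_four (Bval A x u) with h' | h' <;> rw [h'] at h ⊢ <;> rcases ht with rfl | rfl
      · exact absurd rfl h
      · rfl
      · rfl
      · exact absurd rfl h)
  have hc : (Finset.univ : Finset V8).card = 4096 := by
    simp [Finset.card_univ, ZMod.card]
  omega

theorem case_one_aux (n : ZMod 8) (hn : 4 * n = 4) (u v : V8) (huv : 4 * Bval A u v = 4)
    (hu : 4 * Qval A u = 4) :
    256 ≤ (Finset.univ.filter (fun x : V8 => Qval A x = n)).card := by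
  obtain ⟨t, ht, z, hz, hzu, f, hf⟩ : ∃ t : ZMod 8, (t = 0 ∨ t = 4) ∧ ∃ z : V8,
      (∀ x : V8, 4 * Bval A x u = t → 4 * Qval A (x + z) = 4 * Qval A x + 4) ∧
      4 * Bval A z u = 0 ∧
      ∃ f : V8 → V8, ∀ x : V8, 4 * Bval A x u = t → 4 * Qval A x = 4 →
        4 * Bval A x (f ((4 : ZMod 8) • x)) = 4 := by
    by_cases hr : ∃ z : V8, 4 * Qval A z = 4 ∧ ∀ b, 4 * Bval A z b = 0
    · obtain ⟨z, hz, hzb⟩ := hr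
      refine ⟨4, Or.inr rfl, z, ?_, hzb u, fun _ => u, fun x h _ => h⟩
      intro x _
      rw [Qval_add, Bval_comm]
      linear_combination hz + hzb x
    · refine ⟨0, Or.inl rfl, u, ?_, ?_, ?_⟩
      · intro x hx
        rw [Qval_add]
        linear_combination hu + hx
      · rw [Bval_self]; linear_combination Qval A u * z8_eight
      · have : ∀ y : V8, ∃ b : V8, ∀ x : V8, (4 : ZMod 8) • x = y → 4 * Qval A x = 4 →
            4 * Bval A x b = 4 := by
          intro y
          by_cases hy : ∃ z : V8, (4 : ZMod 8) • z = y ∧ 4 * Qval A z = 4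
          · obtain ⟨z, hzy, hz⟩ := hy
            have : ∃ b, 4 * Bval A z b ≠ 0 := by
              by_contra! hcon
              exact hr ⟨z, hz, hcon⟩
            obtain ⟨b, hb⟩ := this
            refine ⟨b, fun x hx _ => ?_⟩
            rw [← Bval_smul_left, hx, ← hzy, Bval_smul_left]
            exact (z8_four _).resolve_left hb
          · exact ⟨0, fun x hx hq => absurd ⟨x, hx, hq⟩ hy⟩
        choose f hf using this
        exact ⟨f, fun x _ hq => hf _ x rfl hq⟩
  have c1 := halfB A u v huv t ht
  have c2 : 2 * ((Finset.univ.filter (fun x : V8 => 4 * Bval A x u = t)).filter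
      (fun x => 4 * Qval A x = 4)).card =
      (Finset.univ.filter (fun x : V8 => 4 * Bval A x u = t)).card := halving (Finset.univ.filter (fun x : V8 => 4 * Bval A x u = t))
    (fun x => 4 * Qval A x = 4) (fun x => x + z) (add_left_injective z)
    (by
      intro x hx h
      simp only [Finset.mem_filter, Finset.mem_univ, true_and] at hx ⊢
      refine ⟨by rw [Bval_add_left, mul_add, hx, hzu, add_zero], ?_⟩
      rw [hz x hx, h]
      exact z8_ne 4)
    (by
      intro x hx h
      simp only [Finset.mem_filter, Finset.mem_univ, true_and] at hx ⊢
      refine ⟨by rw [Bval_add_left, mul_add, hx, hzu, add_zero], ?_⟩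
      rw [hz x hx, (z8_four _).resolve_right h, zero_add])
  have c3 : 4 * (((Finset.univ.filter (fun x : V8 => 4 * Bval A x u = t)).filter
      (fun x => 4 * Qval A x = 4)).filter (fun x => Qval A x = n)).card =
      ((Finset.univ.filter (fun x : V8 => 4 * Bval A x u = t)).filter
      (fun x => 4 * Qval A x = 4)).card := quarter A n ((Finset.univ.filter (fun x : V8 => 4 * Bval A x u = t)).filter
    (fun x => 4 * Qval A x = 4)) f
    (by
      intro x hx b
      simp only [Finset.mem_filter, Finset.mem_univ, true_and] at hx ⊢
      rw [Q_add_two, Bval_add_left, Bval_smul_left]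
      constructor
      · linear_combination hx.1 + Bval A b u * z8_eight
      · linear_combination hx.2 + (2 * Qval A b + Bval A x b) * z8_eight)
    (by
      intro x hx
      simp only [Finset.mem_filter, Finset.mem_univ, true_and] at hx
      rw [hx.2, hn])
    (by
      intro x hx
      simp only [Finset.mem_filter, Finset.mem_univ, true_and] at hx
      exact hf x hx.1 hx.2)
  have c4 : (((Finset.univ.filter (fun x : V8 => 4 * Bval A x u = t)).filter
      (fun x => 4 * Qval A x = 4)).filter (fun x => Qval A x = n)).card ≤
      (Finset.univ.filter (fun x : V8 => Qval A x = n)).card :=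
    Finset.card_le_card (Finset.filter_subset_filter _ (Finset.subset_univ _))
  omega

theorem case_one (n : ZMod 8) (hn : 4 * n = 4) (x y : V8) (hxy : 4 * Bval A x y = 4) :
    256 ≤ (Finset.univ.filter (fun x : V8 => Qval A x = n)).card := by
  rcases z8_four (Qval A x) with hx | hx
  · rcases z8_four (Qval A y) with hy | hy
    · refine case_one_aux A n hn (x + y) y ?_ ?_
      · rw [Bval_add_left, Bval_self]
        linear_combination hxy + Qval A y * z8_eight
      · rw [Qval_add]
        linear_combination hx + hy + hxy
    · exact case_one_aux A n hn y x (by rw [Bval_comm, hxy]) hy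
  · exact case_one_aux A n hn x y hxy hx

/-- A fibre on which `Q` is not constant contributes `128`. -/
theorem half_fiber (n : ZMod 8) (hB : ∀ x y : V8, 4 * Bval A x y = 0) (a b : V8)
    (ha : 2 * Qval A a = 2 * n) (hb : 2 * Bval A a b + 4 * Qval A b = 4) :
    ((Finset.univ.filter (fun x : V8 => (4 : ZMod 8) • x = (4 : ZMod 8) • a)).filter
      (fun x => Qval A x = n)).card = 128 := by
  have hfc := fiber_card a
  have hstep : ∀ x : V8, (4 : ZMod 8) • x = (4 : ZMod 8) • a →
      Qval A (x + (2 : ZMod 8) • b) = Qval A x + 4 := by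
    intro x hx
    obtain ⟨c, rfl⟩ := fiber_repr a x hx
    rw [Q_add_two A (a + _), Bval_add_left, Bval_smul_left]
    linear_combination hb + hB c b
  have h : 2 * ((Finset.univ.filter (fun x : V8 => (4 : ZMod 8) • x = (4 : ZMod 8) • a)).filter
      (fun x => Qval A x = n)).card =
      (Finset.univ.filter (fun x : V8 => (4 : ZMod 8) • x = (4 : ZMod 8) • a)).card := halving (Finset.univ.filter (fun x : V8 => (4 : ZMod 8) • x = (4 : ZMod 8) • a))
    (fun x => Qval A x = n) (fun x => x + (2 : ZMod 8) • b) (add_left_injective _)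
    (by
      intro x hx h
      simp only [Finset.mem_filter, Finset.mem_univ, true_and] at hx ⊢
      refine ⟨by rw [four_smul_add_two, hx], ?_⟩
      rw [hstep x hx, h]
      exact z8_ne n)
    (by
      intro x hx h
      simp only [Finset.mem_filter, Finset.mem_univ, true_and] at hx ⊢
      refine ⟨by rw [four_smul_add_two, hx], ?_⟩
      rw [hstep x hx]
      have h2 : 2 * Qval A x = 2 * n := by
        obtain ⟨c, rfl⟩ := fiber_repr a x hx
        rw [Q_add_two]
        linear_combination ha + hB a c + Qval A c * z8_eight
      have := (z8_one' _ _ h2).resolve_left h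
      linear_combination this + z8_eight)
  omega

theorem exists_k (hB : ∀ x y : V8, 4 * Bval A x y = 0) (a w : V8) :
    ∃ k : V8, (4 : ZMod 8) • k ≠ 0 ∧ 2 * Bval A a k = 0 ∧ 2 * Bval A w k = 0 ∧
      4 * Qval A k = 0 := by
  let ι : (Fin 4 → Bool) → V8 := fun e i => if e i then 1 else 0
  let T : (Fin 4 → Bool) → Bool × Bool × Bool := fun e =>
    (decide (2 * Bval A a (ι e) = 0), decide (2 * Bval A w (ι e) = 0),
      decide (4 * Qval A (ι e) = 0))
  obtain ⟨e, e', hne, hT⟩ := Fintype.exists_ne_map_eq_of_card_lt T (by simp)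
  simp only [T, Prod.mk.injEq, decide_eq_decide] at hT
  obtain ⟨h1, h2, h3⟩ := hT
  have eqB : ∀ c : V8, (2 * Bval A c (ι e) = 0 ↔ 2 * Bval A c (ι e') = 0) →
      2 * Bval A c (ι e) = 2 * Bval A c (ι e') := by
    intro c hc
    rcases z8_two _ (hB c (ι e)) with h | h <;> rcases z8_two _ (hB c (ι e')) with h' | h' <;>
      rw [h, h'] at hc ⊢
    · exact (hc.1 rfl).symm
    · exact (hc.2 rfl)
  have eqQ : 4 * Qval A (ι e) = 4 * Qval A (ι e') := by
    rcases z8_four (Qval A (ι e)) with h | h <;> rcases z8_four (Qval A (ι e')) with h' | h' <;>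
      rw [h, h'] at h3 ⊢
    · exact (h3.1 rfl).symm
    · exact (h3.2 rfl)
  refine ⟨ι e + (-1 : ZMod 8) • ι e', ?_, ?_, ?_, ?_⟩
  · intro h
    apply hne
    ext i
    have := congrFun h i
    simp only [ι, Pi.smul_apply, Pi.add_apply, smul_eq_mul, Pi.zero_apply] at this
    revert this
    cases e i <;> cases e' i <;> decide
  · rw [Bval_add, Bval_smul]
    linear_combination eqB a h1
  · rw [Bval_add, Bval_smul]
    linear_combination eqB w h2
  · rw [Qval_add, Qval_smul, Bval_smul]
    linear_combination eqQ + Qval A (ι e') * z8_eight - hB (ι e) (ι e')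

theorem second_class (hB : ∀ x y : V8, 4 * Bval A x y = 0) (a b : V8)
    (ha : 4 * Qval A a = 4) (hb : 2 * Bval A a b + 4 * Qval A b = 4) :
    ∃ a' b' : V8, (4 : ZMod 8) • a' ≠ (4 : ZMod 8) • a ∧ 2 * Qval A a' = 2 * Qval A a ∧
      2 * Bval A a' b' + 4 * Qval A b' = 4 := by
  have sep : ∀ y : V8, 2 * Bval A a y = 0 → (4 : ZMod 8) • y ≠ (4 : ZMod 8) • a := by
    intro y hy h
    obtain ⟨c, rfl⟩ := fiber_repr a y h
    rw [Bval_add, Bval_self, Bval_smul] at hy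
    apply z8_four_ne
    linear_combination hy - ha - hB a c
  obtain ⟨w, hw1, hw2⟩ : ∃ w : V8, 2 * Bval A a w = 0 ∧ 4 * Qval A w = 4 := by
    rcases z8_two _ (hB a b) with h | h
    · exact ⟨b, h, by linear_combination hb - h⟩
    · refine ⟨a + b, ?_, ?_⟩
      · rw [Bval_add, Bval_self]
        linear_combination ha + h + z8_eight
      · rw [Qval_add]
        linear_combination ha + hB a b + hb - h
  rcases z8_two' (Qval A w) (Qval A a) (by rw [hw2, ha]) with h | h
  · exact ⟨w, a, sep w hw1, h, by rw [Bval_comm, hw1, ha, zero_add]⟩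
  · obtain ⟨k, hk, hka, hkw, hkQ⟩ := exists_k A hB a w
    rcases z8_two _ hkQ with h' | h'
    · refine ⟨a + k, w, ?_, ?_, ?_⟩
      · rw [smul_add]
        intro e
        exact hk (add_eq_left.mp e)
      · rw [Qval_add]
        linear_combination h' + hka
      · rw [Bval_add_left, Bval_comm A k w]
        linear_combination hw1 + hkw + hw2
    · refine ⟨w + k, a, sep _ ?_, ?_, ?_⟩
      · rw [Bval_add]
        linear_combination hw1 + hka
      · rw [Qval_add]
        linear_combination h + h' + hkw + z8_eight
      · rw [Bval_comm, Bval_add]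
        linear_combination hw1 + hka + ha

theorem case_two (n : ZMod 8) (hn : 4 * n = 4) (hB : ∀ x y : V8, 4 * Bval A x y = 0)
    (a : V8) (ha : Qval A a = n) :
    256 ≤ (Finset.univ.filter (fun x : V8 => Qval A x = n)).card := by
  by_cases hl : ∀ b, 2 * Bval A a b + 4 * Qval A b = 0
  · rw [← fiber_card a]
    apply Finset.card_le_card
    intro x hx
    simp only [Finset.mem_filter, Finset.mem_univ, true_and] at hx ⊢
    obtain ⟨c, rfl⟩ := fiber_repr a x hx
    rw [Q_add_two]
    linear_combination ha + hl c
  · push Not at hl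
    obtain ⟨b, hb⟩ := hl
    have hb : 2 * Bval A a b + 4 * Qval A b = 4 := by
      have := z8_two (Bval A a b + 2 * Qval A b)
        (by linear_combination hB a b + Qval A b * z8_eight)
      rcases this with h | h
      · exact absurd (by linear_combination h) hb
      · linear_combination h
    obtain ⟨a', b', hne, hq, hb'⟩ := second_class A hB a b (by rw [ha, hn]) hb
    have c1 := half_fiber A n hB a b (by rw [ha]) hb
    have c2 := half_fiber A n hB a' b' (by rw [hq, ha]) hb'
    rw [show 256 = 128 + 128 from rfl]
    nth_rewrite 1 [← c1]
    rw [← c2, ← Finset.card_union_of_disjoint]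
    · apply Finset.card_le_card
      intro x hx
      simp only [Finset.mem_union, Finset.mem_filter, Finset.mem_univ, true_and] at hx ⊢
      rcases hx with hx | hx <;> exact hx.2
    · rw [Finset.disjoint_left]
      intro x hx hx'
      simp only [Finset.mem_filter, Finset.mem_univ, true_and] at hx hx'
      exact hne (hx'.1.symm.trans hx.1)

end core

theorem count_eight (A : Matrix (Fin 4) (Fin 4) ℤ) (n : ℕ) (hn : Odd n)
    (a : V8) (ha : Qval A a = (n : ZMod 8)) : 256 ≤ localCount A 2 n 3 := by
  rw [localCount_eq]
  change 256 ≤ (Finset.univ.filter (fun x : V8 => Qval A x = (n : ZMod 8))).card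
  have hn4 : 4 * (n : ZMod 8) = 4 := by
    obtain ⟨m, rfl⟩ := hn
    push_cast
    linear_combination (m : ZMod 8) * z8_eight
  by_cases hB : ∀ x y : V8, 4 * Bval A x y = 0
  · exact case_two A _ hn4 hB a ha
  · push Not at hB
    obtain ⟨x, y, hxy⟩ := hB
    exact case_one A _ hn4 x y ((z8_four _).resolve_left hxy)

theorem local_density_odd_n_two
    (A : Matrix (Fin 4) (Fin 4) ℤ) (n : ℕ)
    (hA : IsGram A) (hprim : IsPrimitiveQF A) (hpd : PosDefQF A)
    (hn : 0 < n) (hoddn : Odd n)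
    (h : ∃ x : Fin 4 → ℤ_[2], Qval A x = (n : ℤ_[2])) :
    DensityBound A 2 n (1 / 2 : ℝ) := by
  have h256 : 256 ≤ localCount A 2 n 3 := by
    obtain ⟨x, hx⟩ := h
    refine count_eight A n hoddn (fun i => PadicInt.toZModPow 3 (x i)) ?_
    have := Qval_map (PadicInt.toZModPow (p := 2) 3) A x
    rw [hx, map_natCast] at this
    exact this
  refine ⟨(localCount A 2 n 3 : ℝ) / 512, ?_, ?_⟩
  · refine tendsto_const_nhds.congr' ?_
    filter_upwards [Filter.eventually_ge_atTop 3] with k hk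
    obtain ⟨d, rfl⟩ := Nat.exists_eq_add_of_le hk
    rw [localCount_ge_three A n d hoddn]
    have : ((2 : ℕ) : ℝ) ^ (3 * (3 + d)) = 512 * 8 ^ d := by
      rw [pow_mul, pow_add]; norm_num
    rw [this]
    push_cast
    field_simp
  · have : (256 : ℝ) ≤ localCount A 2 n 3 := by exact_mod_cast h256
    linarith
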